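/- arXiv:1503.01673 — 5 statements merged into one kernel-verified Lean document; each statement's English description precedes it below -/
import Mathlib

section
/- Let A and B be real symmetric positive semidefinite n×n matrices. Then det(I + A + B) ≤ det(I + A) · det(I + B). Consequently, if κ = Σ_{j=1}^M κ^{(j)} is an additive kernel with each κ^{(j)} symmetric positive semidefinite, then for any points x_1, …, x_T and any η > 0, the information gain of κ at these points is at most the sum over j of the information gains of the κ^{(j)} at the same points; in particular γ_T(κ) ≤ Σ_{j=1}^M γ_T(κ^{(j)}). -/
open Matrix

/-- The information gain of the points `x_1, …, x_T` for kernel `κ` at noise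
level `η`: `(1/2) log det(I + η⁻² K)` where `K_{pq} = κ(x_p, x_q)`. -/
noncomputable def infoGain {X : Type*} {T : ℕ} (κ : X → X → ℝ) (η : ℝ)
    (x : Fin T → X) : ℝ :=
  (1 / 2) * Real.log
    ((1 + (η ^ 2)⁻¹ • Matrix.of fun p q => κ (x p) (x q)).det)

theorem aux_psd_factor {n : ℕ} {A : Matrix (Fin n) (Fin n) ℝ} (hA : A.PosSemidef) :
    ∃ C : Matrix (Fin n) (Fin n) ℝ, A = Cᴴ * C := by
  open scoped MatrixOrder in
  obtain ⟨C, hC⟩ := CStarAlgebra.nonneg_iff_eq_star_mul_self.mp hA.nonneg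
  exact ⟨C, hC⟩

theorem aux_one_le_det {n : ℕ} {Z : Matrix (Fin n) (Fin n) ℝ} (hZ : Z.PosSemidef) :
    1 ≤ (1 + Z).det := by
  have h : (1 + Z).IsHermitian := (PosSemidef.one.add hZ).isHermitian
  rw [h.det_eq_prod_eigenvalues]
  have key : ∀ i, 1 ≤ h.eigenvalues i := by
    intro i
    rw [h.eigenvalues_eq, add_mulVec, one_mulVec, dotProduct_add, map_add]
    have h1 := hZ.re_dotProduct_nonneg (h.eigenvectorBasis i : Fin n → ℝ)
    have h2 : star (h.eigenvectorBasis i : Fin n → ℝ) ⬝ᵥ (h.eigenvectorBasis i : Fin n → ℝ) = 1 := by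
      have := h.eigenvectorBasis.orthonormal.1 i
      have h3 := EuclideanSpace.real_norm_sq_eq (h.eigenvectorBasis i)
      rw [this] at h3
      simp only [dotProduct, Pi.star_apply, star_trivial]
      simp only [← pow_two]
      rw [← h3]; norm_num
    rw [h2]
    have h4 : RCLike.re (1 : ℝ) = 1 := by simp
    rw [h4]
    exact le_add_of_nonneg_right h1
  have := Finset.prod_le_prod (s := Finset.univ) (f := fun _ : Fin n => (1 : ℝ))
    (g := h.eigenvalues) (fun _ _ => zero_le_one) (fun i _ => key i)
  simpa using this

theorem aux_det_add {n : ℕ} {X C : Matrix (Fin n) (Fin n) ℝ} (hX : X.PosDef) :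
    (X + Cᴴ * C).det = X.det * (1 + C * X⁻¹ * Cᴴ).det := by
  have hu : IsUnit X.det := (Matrix.isUnit_iff_isUnit_det _).mp hX.isUnit
  have : X + Cᴴ * C = X * (1 + X⁻¹ * Cᴴ * C) := by
    rw [mul_add, mul_one, Matrix.mul_assoc, Matrix.mul_nonsing_inv_cancel_left _ _ hu]
  rw [this, det_mul, det_one_add_mul_comm, Matrix.mul_assoc]

theorem aux_det_mono {n : ℕ} {X Y : Matrix (Fin n) (Fin n) ℝ} (hX : X.PosDef)
    (hY : Y.PosSemidef) : X.det ≤ (X + Y).det := by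
  obtain ⟨C, rfl⟩ := aux_psd_factor hY
  rw [aux_det_add hX]
  exact le_mul_of_one_le_right hX.det_pos.le
    (aux_one_le_det (hX.inv.posSemidef.mul_mul_conjTranspose_same C))

theorem aux_one_sub_inv {n : ℕ} {A : Matrix (Fin n) (Fin n) ℝ} (hA : A.PosSemidef) :
    (1 - (1 + A)⁻¹).PosSemidef := by
  have hX : (1 + A).PosDef := PosDef.one.add_posSemidef hA
  have hu : IsUnit (1 + A).det := (Matrix.isUnit_iff_isUnit_det _).mp hX.isUnit
  have h1 : (A + Aᴴ * A).PosSemidef := hA.add (posSemidef_conjTranspose_mul_self A)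
  have h2 := h1.conjTranspose_mul_mul_same (1 + A)⁻¹
  rw [hX.inv.isHermitian.eq, hA.isHermitian.eq] at h2
  have e : A + A * A = (1 + A) * A := by rw [add_mul, one_mul]
  rw [e, ← Matrix.mul_assoc, Matrix.nonsing_inv_mul _ hu, one_mul] at h2
  have e2 : 1 - (1 + A)⁻¹ = A * (1 + A)⁻¹ := by
    have := Matrix.mul_nonsing_inv _ hu
    rw [add_mul, one_mul] at this
    exact sub_eq_of_eq_add' this.symm
  rwa [e2]

theorem aux_main {n : ℕ} {A B : Matrix (Fin n) (Fin n) ℝ} (hA : A.PosSemidef)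
    (hB : B.PosSemidef) : (1 + A + B).det ≤ (1 + A).det * (1 + B).det := by
  obtain ⟨C, rfl⟩ := aux_psd_factor hB
  have hX : (1 + A).PosDef := PosDef.one.add_posSemidef hA
  rw [aux_det_add hX, det_one_add_mul_comm Cᴴ C]
  refine mul_le_mul_of_nonneg_left ?_ hX.det_pos.le
  have h1 : (1 + C * (1 + A)⁻¹ * Cᴴ).PosDef :=
    PosDef.one.add_posSemidef (hX.inv.posSemidef.mul_mul_conjTranspose_same C)
  have h2 := (aux_one_sub_inv hA).mul_mul_conjTranspose_same C
  have h3 := aux_det_mono h1 h2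
  have e : 1 + C * (1 + A)⁻¹ * Cᴴ + C * (1 - (1 + A)⁻¹) * Cᴴ = 1 + C * Cᴴ := by
    rw [mul_sub, sub_mul, mul_one]; abel
  rwa [e] at h3

theorem aux_sum {n : ℕ} {ι : Type*} (s : Finset ι) (A : ι → Matrix (Fin n) (Fin n) ℝ)
    (hA : ∀ j, (A j).PosSemidef) : (1 + ∑ j ∈ s, A j).det ≤ ∏ j ∈ s, (1 + A j).det := by
  classical
  induction s using Finset.induction_on with
  | empty => simp
  | insert a s ha ih =>
    rw [Finset.sum_insert ha, Finset.prod_insert ha, ← add_assoc]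
    refine (aux_main (hA a) (posSemidef_sum s fun j _ => hA j)).trans ?_
    exact mul_le_mul_of_nonneg_left ih (PosSemidef.one.add (hA a)).det_nonneg

theorem aux_info (X : Type) (M : ℕ) (κ : Fin M → X → X → ℝ)
    (hκ : ∀ (j : Fin M) (n : ℕ) (p : Fin n → X),
        (Matrix.of fun s t => κ j (p s) (p t)).PosSemidef)
    (η : ℝ) (T : ℕ) (x : Fin T → X) :
    infoGain (fun u v => ∑ j, κ j u v) η x ≤ ∑ j, infoGain (κ j) η x := by
  unfold infoGain
  have hA : ∀ j, ((η ^ 2)⁻¹ • Matrix.of fun p q => κ j (x p) (x q)).PosSemidef := fun j =>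
    (hκ j T x).smul (by positivity)
  have e : ((η ^ 2)⁻¹ • Matrix.of fun p q => ∑ j, κ j (x p) (x q))
      = ∑ j, ((η ^ 2)⁻¹ • Matrix.of fun p q => κ j (x p) (x q)) := by
    ext p q
    simp [Matrix.sum_apply, Finset.mul_sum]
  rw [e, ← Finset.mul_sum, ← Real.log_prod]
  · refine mul_le_mul_of_nonneg_left ?_ (by norm_num)
    refine Real.log_le_log ?_ (aux_sum _ _ hA)
    exact (PosDef.one.add_posSemidef (posSemidef_sum _ fun j _ => hA j)).det_pos
  · exact fun j _ => (PosDef.one.add_posSemidef (hA j)).det_pos.ne.symm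

/-- `det(I + A + B) ≤ det(I + A) det(I + B)` for real symmetric positive
semidefinite matrices; consequently the information gain of an additive kernel
`κ = ∑ⱼ κ⁽ʲ⁾` at any set of points is at most the sum of the information gains
of the components at the same points, and hence any upper bounds `gⱼ` on the
maximum information gains of the components sum to an upper bound on the
maximum information gain of `κ` (i.e. `γ_T(κ) ≤ ∑ⱼ γ_T(κ⁽ʲ⁾)`). -/
theorem stmt_3 :
    (∀ (n : ℕ) (A B : Matrix (Fin n) (Fin n) ℝ),
      A.PosSemidef → B.PosSemidef →
      (1 + A + B).det ≤ (1 + A).det * (1 + B).det) ∧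
    (∀ (X : Type) (M : ℕ) (κ : Fin M → X → X → ℝ),
      (∀ (j : Fin M) (n : ℕ) (p : Fin n → X),
        (Matrix.of fun s t => κ j (p s) (p t)).PosSemidef) →
      ∀ (η : ℝ), 0 < η → ∀ (T : ℕ) (x : Fin T → X),
        infoGain (fun u v => ∑ j, κ j u v) η x ≤ ∑ j, infoGain (κ j) η x) ∧
    (∀ (X : Type) (M : ℕ) (κ : Fin M → X → X → ℝ),
      (∀ (j : Fin M) (n : ℕ) (p : Fin n → X),
        (Matrix.of fun s t => κ j (p s) (p t)).PosSemidef) →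
      ∀ (η : ℝ), 0 < η → ∀ (T : ℕ) (g : Fin M → ℝ),
        (∀ (j : Fin M) (x : Fin T → X), infoGain (κ j) η x ≤ g j) →
        ∀ x : Fin T → X,
          infoGain (fun u v => ∑ j, κ j u v) η x ≤ ∑ j, g j) := by
  refine ⟨fun n A B hA hB => aux_main hA hB, fun X M κ hκ η _ T x => aux_info X M κ hκ η T x, ?_⟩
  intro X M κ hκ η _ T g hg x
  exact (aux_info X M κ hκ η T x).trans (Finset.sum_le_sum fun j _ => hg j x)
end

section
/- Let κ be a symmetric positive semidefinite kernel on X, η > 0, and x_1, …, x_T ∈ X any sequence of points. Then (1/2) log det(I_T + η^{−2} K_T) = (1/2) Σ_{t=1}^T log( 1 + η^{−2} σ_{t−1}²(x_t) ), where (K_T)_{pq} = κ(x_p, x_q) and σ_{t−1}² is the Gaussian-process posterior variance after the first t−1 points. That is, the information gain of the sequence telescopes as the sum of the log one-step predictive variance ratios. -/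
open Matrix

/-- Gaussian-process posterior variance at `z` after observing the points
`xs`, for kernel `κ` and noise level `η`:
`σ_t²(z) = κ(z,z) − k_t(z)ᵀ (K_t + η² I)⁻¹ k_t(z)`. -/
noncomputable def postVar {X : Type*} (κ : X → X → ℝ) (η : ℝ) {t : ℕ}
    (xs : Fin t → X) (z : X) : ℝ :=
  κ z z -
    (fun p => κ z (xs p)) ⬝ᵥ
      (((Matrix.of fun p q => κ (xs p) (xs q)) +
          η ^ 2 • (1 : Matrix (Fin t) (Fin t) ℝ))⁻¹ *ᵥ fun p => κ (xs p) z)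

theorem gramNoise_posDef {X : Type*} (κ : X → X → ℝ)
    (hpsd : ∀ (n : ℕ) (p : Fin n → X),
      (Matrix.of fun s t => κ (p s) (p t)).PosSemidef)
    (η : ℝ) (hη : 0 < η) (n : ℕ) (x : Fin n → X) :
    ((Matrix.of fun p q => κ (x p) (x q)) + η ^ 2 • (1 : Matrix (Fin n) (Fin n) ℝ)).PosDef :=
  Matrix.PosDef.posSemidef_add (hpsd n x) (Matrix.PosDef.one.smul (by positivity))

theorem det_info_eq {X : Type*} (κ : X → X → ℝ)
    (η : ℝ) (hη : 0 < η) (n : ℕ) (x : Fin n → X) :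
    (1 + (η ^ 2)⁻¹ • Matrix.of fun p q => κ (x p) (x q)).det
      = ((η ^ 2)⁻¹) ^ n * ((Matrix.of fun p q => κ (x p) (x q)) +
          η ^ 2 • (1 : Matrix (Fin n) (Fin n) ℝ)).det := by
  have h : (1 + (η ^ 2)⁻¹ • Matrix.of fun p q => κ (x p) (x q)) =
      (η ^ 2)⁻¹ • ((Matrix.of fun p q => κ (x p) (x q)) +
          η ^ 2 • (1 : Matrix (Fin n) (Fin n) ℝ)) := by
    rw [smul_add, smul_smul, inv_mul_cancel₀ (by positivity), one_smul, add_comm]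
  rw [h, Matrix.det_smul, Fintype.card_fin]

theorem det_gramNoise_succ {X : Type*} (κ : X → X → ℝ)
    (hpsd : ∀ (n : ℕ) (p : Fin n → X),
      (Matrix.of fun s t => κ (p s) (p t)).PosSemidef)
    (η : ℝ) (hη : 0 < η) (n : ℕ) (x : Fin (n + 1) → X) :
    ((Matrix.of fun p q => κ (x p) (x q)) +
          η ^ 2 • (1 : Matrix (Fin (n + 1)) (Fin (n + 1)) ℝ)).det
    = ((Matrix.of fun p q => κ (x (Fin.castSucc p)) (x (Fin.castSucc q))) +
          η ^ 2 • (1 : Matrix (Fin n) (Fin n) ℝ)).det *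
      (η ^ 2 + postVar κ η (fun s : Fin n => x (Fin.castSucc s)) (x (Fin.last n))) := by
  set A := ((Matrix.of fun p q => κ (x (Fin.castSucc p)) (x (Fin.castSucc q))) +
          η ^ 2 • (1 : Matrix (Fin n) (Fin n) ℝ)) with hA
  have hpd : A.PosDef := gramNoise_posDef κ hpsd η hη n (fun s => x (Fin.castSucc s))
  letI : Invertible A := hpd.isUnit.invertible
  rw [← Matrix.det_submatrix_equiv_self (finSumFinEquiv (m := n) (n := 1))]
  have hb : ((Matrix.of fun p q => κ (x p) (x q)) +
          η ^ 2 • (1 : Matrix (Fin (n + 1)) (Fin (n + 1)) ℝ)).submatrix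
            (finSumFinEquiv (m := n) (n := 1)) (finSumFinEquiv (m := n) (n := 1)) =
      Matrix.fromBlocks A
        (Matrix.of fun p (_ : Fin 1) => κ (x (Fin.castSucc p)) (x (Fin.last n)))
        (Matrix.of fun (_ : Fin 1) p => κ (x (Fin.last n)) (x (Fin.castSucc p)))
        (Matrix.of fun (_ _ : Fin 1) => κ (x (Fin.last n)) (x (Fin.last n)) + η ^ 2) := by
    have hl : Fin.natAdd n (0 : Fin 1) = Fin.last n := by ext; simp
    have hc : ∀ i : Fin n, Fin.castAdd 1 i = Fin.castSucc i := fun _ => rfl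
    ext i j
    rcases i with i | i <;> rcases j with j | j
    · simp [hA, hc, Matrix.one_apply]
    · have : j = 0 := Subsingleton.elim _ _
      subst this
      simp [hl, hc, Matrix.one_apply, (Fin.castSucc_lt_last i).ne]
    · have : i = 0 := Subsingleton.elim _ _
      subst this
      simp [hl, hc, Matrix.one_apply, (Fin.castSucc_lt_last j).ne']
    · have : i = 0 := Subsingleton.elim _ _
      subst this
      have : j = 0 := Subsingleton.elim _ _
      subst this
      simp [hl]
  rw [hb, Matrix.det_fromBlocks₁₁, Matrix.det_unique (n := Fin 1), Matrix.invOf_eq_nonsing_inv,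
    Matrix.mul_assoc]
  congr 1
  unfold postVar
  rw [← hA]
  have : ∀ a b c : ℝ, a + b - c = b + (a - c) := fun a b c => by ring
  exact this _ _ _

/-- The information gain telescopes: for any symmetric positive semidefinite
kernel `κ`, noise level `η > 0` and points `x_1, …, x_T`,
`(1/2) log det(I + η⁻² K_T) = (1/2) ∑_{t=1}^T log(1 + η⁻² σ_{t−1}²(x_t))`,
where `σ_{t−1}²` is the posterior variance after the first `t − 1` points. -/
theorem stmt_4 {X : Type*} (κ : X → X → ℝ)
    (hsymm : ∀ u v, κ u v = κ v u)
    (hpsd : ∀ (n : ℕ) (p : Fin n → X),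
      (Matrix.of fun s t => κ (p s) (p t)).PosSemidef)
    (η : ℝ) (hη : 0 < η) (T : ℕ) (x : Fin T → X) :
    (1 / 2) * Real.log
        ((1 + (η ^ 2)⁻¹ • Matrix.of fun p q => κ (x p) (x q)).det)
      = (1 / 2) * ∑ t : Fin T,
          Real.log (1 + (η ^ 2)⁻¹ *
            postVar κ η (fun s : Fin t.val => x (Fin.castLE t.isLt.le s)) (x t)) := by
  congr 1
  induction T with
  | zero => simp
  | succ n ih =>
    have hdet := det_gramNoise_succ κ hpsd η hη n x
    have h1 := (gramNoise_posDef κ hpsd η hη (n + 1) x).det_pos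
    have h0 := (gramNoise_posDef κ hpsd η hη n (fun s => x (Fin.castSucc s))).det_pos
    have hv : 0 < η ^ 2 + postVar κ η (fun s : Fin n => x (Fin.castSucc s)) (x (Fin.last n)) := by
      rw [hdet] at h1
      exact pos_of_mul_pos_right h1 h0.le
    have hη2 : 0 < (η ^ 2)⁻¹ := by positivity
    have hfac : 1 + (η ^ 2)⁻¹ *
        postVar κ η (fun s : Fin n => x (Fin.castSucc s)) (x (Fin.last n)) =
        (η ^ 2)⁻¹ *
          (η ^ 2 + postVar κ η (fun s : Fin n => x (Fin.castSucc s)) (x (Fin.last n))) := by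
      rw [mul_add, inv_mul_cancel₀ (by positivity)]
    have ih' := ih (fun s => x (Fin.castSucc s))
    rw [Fin.sum_univ_castSucc]
    refine Eq.trans ?_ (congrArg₂ (· + ·) ih' (congrArg Real.log hfac.symm))
    rw [det_info_eq κ η hη, det_info_eq κ η hη, hdet,
      ← Real.log_mul (mul_pos (pow_pos hη2 n) h0).ne' (mul_pos hη2 hv).ne']
    congr 1
    ring
end

section
/- Let κ be a symmetric positive semidefinite kernel on X with κ(x, x) ≤ 1 for all x, let η > 0, and let x_1, …, x_T ∈ X. Then Σ_{t=1}^T σ_{t−1}²(x_t) ≤ (2 / log(1 + η^{−2})) · (1/2) log det(I_T + η^{−2} K_T), i.e. the sum of the one-step posterior variances along any query sequence is at most 2 C₁ times the information gain of the sequence, where C₁ = 1/log(1 + η^{−2}). -/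
open Matrix

theorem aux_posDef {n : ℕ} (K : Matrix (Fin n) (Fin n) ℝ) (hK : K.PosSemidef) (η : ℝ) (hη : 0 < η) :
    (K + η ^ 2 • (1 : Matrix (Fin n) (Fin n) ℝ)).PosDef := by
  have h1 : (η ^ 2 • (1 : Matrix (Fin n) (Fin n) ℝ)).PosDef := Matrix.PosDef.one.smul (by positivity)
  exact Matrix.PosDef.posSemidef_add hK h1

theorem aux_le {X : Type*} (κ : X → X → ℝ)
    (hsymm : ∀ u v, κ u v = κ v u)
    (hpsd : ∀ (n : ℕ) (p : Fin n → X),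
      (Matrix.of fun s t => κ (p s) (p t)).PosSemidef)
    (η : ℝ) (hη : 0 < η) (n : ℕ) (x : Fin n → X) (z : X) :
    postVar κ η x z ≤ κ z z := by
  have h := (aux_posDef _ (hpsd n x) η hη).inv.posSemidef.dotProduct_mulVec_nonneg (fun p => κ (x p) z)
  unfold postVar
  have e : (fun p => κ z (x p)) = star (fun p => κ (x p) z) := by
    ext p; simp [hsymm z]
  rw [e]
  linarith

theorem aux_nonneg {X : Type*} (κ : X → X → ℝ)
    (hsymm : ∀ u v, κ u v = κ v u)
    (hpsd : ∀ (n : ℕ) (p : Fin n → X),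
      (Matrix.of fun s t => κ (p s) (p t)).PosSemidef)
    (η : ℝ) (hη : 0 < η) (n : ℕ) (x : Fin n → X) (z : X) :
    0 ≤ postVar κ η x z := by
  have hM := aux_posDef _ (hpsd n x) η hη
  set M := (Matrix.of fun p q => κ (x p) (x q)) + η ^ 2 • (1 : Matrix (Fin n) (Fin n) ℝ) with hMdef
  let B : Matrix (Fin n) (Fin 1) ℝ := Matrix.of fun p _ => κ (x p) z
  let D : Matrix (Fin 1) (Fin 1) ℝ := Matrix.of fun _ _ => κ z z
  haveI := hM.isUnit.invertible
  have hblock : (Matrix.fromBlocks M B Bᴴ D).PosSemidef := by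
    have h1 := (hpsd (n + 1) (Fin.append x ![z])).submatrix finSumFinEquiv
    have h2 : (Matrix.fromBlocks (η ^ 2 • (1 : Matrix (Fin n) (Fin n) ℝ)) 0 0
        (0 : Matrix (Fin 1) (Fin 1) ℝ)).PosSemidef := by
      have : (Matrix.diagonal (Sum.elim (fun _ : Fin n => η ^ 2) (fun _ : Fin 1 => 0))).PosSemidef := by
        apply Matrix.PosSemidef.diagonal
        rintro (i | i) <;> simp; positivity
      convert this using 1
      rw [Matrix.smul_one_eq_diagonal, ← Matrix.diagonal_zero, Matrix.fromBlocks_diagonal]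
    convert h1.add h2 using 1
    ext (i | i) (j | j) <;> simp [M, B, D, hsymm z]
  have h := (Matrix.PosDef.fromBlocks₁₁ B D hM).1 hblock
  have h' := h.diag_nonneg (i := 0)
  unfold postVar
  rw [← hMdef]
  have e : (D - Bᴴ * M⁻¹ * B) 0 0 = κ z z -
      (fun p => κ z (x p)) ⬝ᵥ (M⁻¹ *ᵥ fun p => κ (x p) z) := by
    simp only [D, B, Matrix.sub_apply, Matrix.of_apply, Matrix.mul_apply, dotProduct, Matrix.mulVec,
      Finset.mul_sum, Finset.sum_mul, Matrix.conjTranspose_apply, star_trivial]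
    rw [Finset.sum_comm]
    simp only [mul_assoc, fun p => hsymm z (x p)]
  rw [← e]
  exact h'

theorem aux_det {X : Type*} (κ : X → X → ℝ)
    (hsymm : ∀ u v, κ u v = κ v u)
    (hpsd : ∀ (n : ℕ) (p : Fin n → X),
      (Matrix.of fun s t => κ (p s) (p t)).PosSemidef)
    (η : ℝ) (hη : 0 < η) (n : ℕ) (x : Fin (n + 1) → X) :
    ((Matrix.of fun p q => κ (x p) (x q)) + η ^ 2 • (1 : Matrix (Fin (n+1)) (Fin (n+1)) ℝ)).det =
    ((Matrix.of fun p q => κ (x (Fin.castSucc p)) (x (Fin.castSucc q))) +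
      η ^ 2 • (1 : Matrix (Fin n) (Fin n) ℝ)).det *
      (η ^ 2 + postVar κ η (fun i => x (Fin.castSucc i)) (x (Fin.last n))) := by
  have hM := aux_posDef _ (hpsd n (fun i => x (Fin.castSucc i))) η hη
  unfold postVar
  set M := (Matrix.of fun p q => κ (x (Fin.castSucc p)) (x (Fin.castSucc q))) +
      η ^ 2 • (1 : Matrix (Fin n) (Fin n) ℝ) with hMdef
  set z := x (Fin.last n) with hz
  let B : Matrix (Fin n) (Fin 1) ℝ := Matrix.of fun p _ => κ (x (Fin.castSucc p)) z
  let C : Matrix (Fin 1) (Fin n) ℝ := Matrix.of fun _ p => κ z (x (Fin.castSucc p))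
  let D : Matrix (Fin 1) (Fin 1) ℝ := Matrix.of fun _ _ => κ z z + η ^ 2
  haveI := hM.isUnit.invertible
  rw [← Matrix.det_submatrix_equiv_self finSumFinEquiv]
  have e : ((Matrix.of fun p q => κ (x p) (x q)) +
      η ^ 2 • (1 : Matrix (Fin (n+1)) (Fin (n+1)) ℝ)).submatrix finSumFinEquiv finSumFinEquiv
      = Matrix.fromBlocks M B C D := by
    have hc : ∀ i : Fin n, Fin.castAdd 1 i = Fin.castSucc i := fun i => rfl
    have hl : ∀ i : Fin 1, Fin.natAdd n i = Fin.last n := fun i => by ext; simp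
    ext (i | i) (j | j)
    · simp [M, hc, Matrix.one_apply]
    · simp [B, hc, hl, hz, Matrix.one_apply, Fin.castSucc_ne_last]
    · simp [C, hc, hl, hz, Matrix.one_apply, (Fin.castSucc_ne_last _).symm]
    · simp [D, hl, hz]
  rw [e, Matrix.det_fromBlocks₁₁, Matrix.det_fin_one, Matrix.invOf_eq_nonsing_inv]
  congr 1
  simp only [D, B, C, Matrix.sub_apply, Matrix.of_apply, Matrix.mul_apply, dotProduct, Matrix.mulVec,
    Finset.mul_sum, Finset.sum_mul]
  rw [Finset.sum_comm]
  simp only [mul_assoc]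
  ring

theorem aux_log (a s : ℝ) (ha : 0 < a) (h0 : 0 ≤ s) (h1 : s ≤ 1) :
    s * Real.log (1 + a) ≤ Real.log (1 + s * a) := by
  rw [← Real.log_rpow (by positivity)]
  exact Real.log_le_log (by positivity) (rpow_one_add_le_one_add_mul_self (by linarith) h0 h1)

theorem aux_scale {n : ℕ} (K : Matrix (Fin n) (Fin n) ℝ) (η : ℝ) (hη : 0 < η) :
    (1 + (η ^ 2)⁻¹ • K).det = ((η ^ 2)⁻¹) ^ n * (K + η ^ 2 • (1 : Matrix (Fin n) (Fin n) ℝ)).det := by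
  have : 1 + (η ^ 2)⁻¹ • K = (η ^ 2)⁻¹ • (K + η ^ 2 • (1 : Matrix (Fin n) (Fin n) ℝ)) := by
    rw [smul_add, smul_smul, inv_mul_cancel₀ (by positivity), one_smul, add_comm]
  rw [this, Matrix.det_smul, Fintype.card_fin]

theorem aux_main_s5 {X : Type*} (κ : X → X → ℝ)
    (hsymm : ∀ u v, κ u v = κ v u)
    (hpsd : ∀ (n : ℕ) (p : Fin n → X),
      (Matrix.of fun s t => κ (p s) (p t)).PosSemidef)
    (hbdd : ∀ u, κ u u ≤ 1)
    (η : ℝ) (hη : 0 < η) (T : ℕ) (x : Fin T → X) :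
    (∑ t : Fin T, postVar κ η (fun s : Fin t.val => x (Fin.castLE t.isLt.le s)) (x t))
      * Real.log (1 + (η ^ 2)⁻¹) ≤ Real.log
            ((1 + (η ^ 2)⁻¹ • Matrix.of fun p q => κ (x p) (x q)).det) := by
  induction T with
  | zero => simp
  | succ n ih =>
    have ih := ih (fun i => x (Fin.castSucc i))
    have hd := aux_det κ hsymm hpsd η hη n x
    have hpos := (aux_posDef _ (hpsd n (fun i => x (Fin.castSucc i))) η hη).det_pos
    have h0 := aux_nonneg κ hsymm hpsd η hη n (fun i => x (Fin.castSucc i)) (x (Fin.last n))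
    have h1 := (aux_le κ hsymm hpsd η hη n (fun i => x (Fin.castSucc i)) (x (Fin.last n))).trans (hbdd _)
    rw [aux_scale _ η hη] at ih ⊢
    rw [hd, Fin.sum_univ_castSucc, add_mul]
    have hl := aux_log (η ^ 2)⁻¹ _ (by positivity) h0 h1
    set s := postVar κ η (fun i => x (Fin.castSucc i)) (x (Fin.last n)) with hs
    set d := ((Matrix.of fun p q => κ (x (Fin.castSucc p)) (x (Fin.castSucc q))) +
      η ^ 2 • (1 : Matrix (Fin n) (Fin n) ℝ)).det
    have e : ((η ^ 2)⁻¹) ^ (n + 1) * (d * (η ^ 2 + s)) =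
        (((η ^ 2)⁻¹) ^ n * d) * (1 + s * (η ^ 2)⁻¹) := by
      have hne : (η ^ 2)⁻¹ * η ^ 2 = 1 := inv_mul_cancel₀ (by positivity)
      rw [pow_succ]
      linear_combination ((η ^ 2)⁻¹) ^ n * d * hne
    rw [e, Real.log_mul (by positivity) (by positivity)]
    exact add_le_add ih hl

/-- For a symmetric positive semidefinite kernel with `κ(x,x) ≤ 1`, the sum of
the one-step posterior variances along any query sequence is at most
`2 C₁` times the information gain of the sequence, `C₁ = 1/log(1 + η⁻²)`. -/
theorem stmt_5 {X : Type*} (κ : X → X → ℝ)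
    (hsymm : ∀ u v, κ u v = κ v u)
    (hpsd : ∀ (n : ℕ) (p : Fin n → X),
      (Matrix.of fun s t => κ (p s) (p t)).PosSemidef)
    (hbdd : ∀ u, κ u u ≤ 1)
    (η : ℝ) (hη : 0 < η) (T : ℕ) (x : Fin T → X) :
    ∑ t : Fin T, postVar κ η (fun s : Fin t.val => x (Fin.castLE t.isLt.le s)) (x t)
      ≤ (2 / Real.log (1 + (η ^ 2)⁻¹)) *
          ((1 / 2) * Real.log
            ((1 + (η ^ 2)⁻¹ • Matrix.of fun p q => κ (x p) (x q)).det)) := by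
  have h := aux_main_s5 κ hsymm hpsd hbdd η hη T x
  have hp : 0 < Real.log (1 + (η ^ 2)⁻¹) := Real.log_pos (by
    have : 0 < (η ^ 2)⁻¹ := by positivity
    linarith)
  rw [← le_div_iff₀ hp] at h
  refine h.trans (le_of_eq ?_)
  ring
end

section
/- Let κ be a symmetric positive semidefinite kernel on X, η > 0, and x_1, …, x_t ∈ X. Then for every x ∈ X, the Gaussian-process posterior variance is nonincreasing in the number of observations: σ_t²(x) ≤ σ_{t−1}²(x), where σ_{t−1}² is computed from the first t−1 points and σ_t² from all t points. -/
open Matrix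

theorem quad_aux {n : ℕ} (M : Matrix (Fin n) (Fin n) ℝ) (hM : M.PosSemidef)
    (b u w : Fin n → ℝ) (hu : M *ᵥ u = b) (hw : w ⬝ᵥ (M *ᵥ w) = b ⬝ᵥ w) :
    b ⬝ᵥ w ≤ b ⬝ᵥ u := by
  have h := hM.dotProduct_mulVec_nonneg (u - w)
  have hT : Mᵀ = M := by
    have := hM.isHermitian.eq
    rwa [conjTranspose_eq_transpose_of_trivial] at this
  have h1 : u ⬝ᵥ (M *ᵥ w) = b ⬝ᵥ w := by
    rw [dotProduct_mulVec, ← mulVec_transpose, hT, hu]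
  rw [star_trivial, mulVec_sub, sub_dotProduct, dotProduct_sub, dotProduct_sub, hw, h1, hu,
    dotProduct_comm u b, dotProduct_comm w b] at h
  linarith

theorem noisy_posDef {X : Type*} (κ : X → X → ℝ)
    (hpsd : ∀ (n : ℕ) (p : Fin n → X),
      (Matrix.of fun s t => κ (p s) (p t)).PosSemidef)
    (η : ℝ) (hη : 0 < η) (t : ℕ) (x : Fin t → X) :
    ((Matrix.of fun p q => κ (x p) (x q)) +
          η ^ 2 • (1 : Matrix (Fin t) (Fin t) ℝ)).PosDef :=
  PosDef.posSemidef_add (hpsd t x) (PosDef.one.smul (by positivity))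

/-- The Gaussian-process posterior variance is nonincreasing in the number of
observations: conditioning on one extra point can only decrease the posterior
variance at every `z`. -/
theorem stmt_7 {X : Type*} (κ : X → X → ℝ)
    (hsymm : ∀ u v, κ u v = κ v u)
    (hpsd : ∀ (n : ℕ) (p : Fin n → X),
      (Matrix.of fun s t => κ (p s) (p t)).PosSemidef)
    (η : ℝ) (hη : 0 < η) (t : ℕ) (x : Fin (t + 1) → X) (z : X) :
    postVar κ η x z ≤ postVar κ η (fun s : Fin t => x s.castSucc) z := by
  have hM := noisy_posDef κ hpsd η hη (t + 1) x
  have hA := noisy_posDef κ hpsd η hη t (fun s : Fin t => x s.castSucc)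
  have hk : ∀ p, κ (x p) z = κ z (x p) := fun p => hsymm _ _
  unfold postVar
  simp only [hk]
  set M := (Matrix.of fun p q => κ (x p) (x q)) +
          η ^ 2 • (1 : Matrix (Fin (t + 1)) (Fin (t + 1)) ℝ) with hMdef
  set A := (Matrix.of fun p q : Fin t => κ (x p.castSucc) (x q.castSucc)) +
          η ^ 2 • (1 : Matrix (Fin t) (Fin t) ℝ) with hAdef
  set b : Fin (t + 1) → ℝ := fun p => κ z (x p) with hb
  set b' : Fin t → ℝ := fun p => κ z (x p.castSucc) with hb'
  have hu : M *ᵥ (M⁻¹ *ᵥ b) = b := by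
    rw [mulVec_mulVec, mul_nonsing_inv _ ((isUnit_iff_isUnit_det _).1 hM.isUnit), one_mulVec]
  have ha : A *ᵥ (A⁻¹ *ᵥ b') = b' := by
    rw [mulVec_mulVec, mul_nonsing_inv _ ((isUnit_iff_isUnit_det _).1 hA.isUnit), one_mulVec]
  generalize A⁻¹ *ᵥ b' = a at ha ⊢
  have hMA : ∀ i j : Fin t, M i.castSucc j.castSucc = A i j := by
    intro i j
    simp [hMdef, hAdef, Matrix.one_apply]
  let w : Fin (t + 1) → ℝ := Fin.snoc a 0
  have hbw : ∀ c : Fin (t + 1) → ℝ, c ⬝ᵥ w = (fun i : Fin t => c i.castSucc) ⬝ᵥ a := by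
    intro c
    simp [dotProduct, Fin.sum_univ_castSucc, w]
  have hMw : ∀ i : Fin t, (M *ᵥ w) i.castSucc = b' i := by
    intro i
    rw [← ha]
    change (M i.castSucc) ⬝ᵥ w = A i ⬝ᵥ a
    rw [hbw]
    simp only [hMA]
  have key := quad_aux M hM.posSemidef b (M⁻¹ *ᵥ b) w hu (by
    rw [dotProduct_comm, hbw, hbw]
    simp only [hMw]
    rfl)
  rw [hbw] at key
  exact sub_le_sub_left key _
end

section
/- Let κ^{(1)}, …, κ^{(M)} be symmetric positive semidefinite kernels on a set X, let κ = Σ_j κ^{(j)}, let x_1, …, x_n ∈ X, η > 0, and Δ = K + η² I_n where K_{pq} = κ(x_p, x_q). Then for every j and every z ∈ X, the component posterior variance is nonnegative: κ^{(j)}(z, z) − k_j(z)^T Δ^{−1} k_j(z) ≥ 0, where k_j(z) ∈ ℝ^n has entries κ^{(j)}(z, x_p). (This shows the conditional variance of the component f^{(j)}(z) given the noisy observations of the additive process, as in Equation (1), is well defined.) -/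
open Matrix

/-- For an additive kernel `κ = ∑ⱼ κ⁽ʲ⁾` built from symmetric positive
semidefinite kernels, the posterior variance of each component,
`κ⁽ʲ⁾(z,z) − kⱼ(z)ᵀ (K + η² I)⁻¹ kⱼ(z)` with `K` the Gram matrix of the full
additive kernel, is nonnegative. -/
theorem stmt_8 {X : Type*} (M : ℕ) (κ : Fin M → X → X → ℝ)
    (hsymm : ∀ j u v, κ j u v = κ j v u)
    (hpsd : ∀ (j : Fin M) (n : ℕ) (p : Fin n → X),
      (Matrix.of fun s t => κ j (p s) (p t)).PosSemidef)
    (n : ℕ) (x : Fin n → X) (η : ℝ) (hη : 0 < η) (j : Fin M) (z : X) :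
    0 ≤ κ j z z -
        (fun p => κ j z (x p)) ⬝ᵥ
          (((Matrix.of fun p q => ∑ i, κ i (x p) (x q)) +
              η ^ 2 • (1 : Matrix (Fin n) (Fin n) ℝ))⁻¹ *ᵥ fun p => κ j (x p) z) := by
  set G : Fin M → Matrix (Fin n) (Fin n) ℝ := fun i => Matrix.of fun p q => κ i (x p) (x q) with hG
  have hsum : (Matrix.of fun p q => ∑ i, κ i (x p) (x q)) = ∑ i, G i := by
    ext p q
    simp [hG, Matrix.sum_apply]
  rw [hsum]
  have hη2 : 0 < η ^ 2 := by positivity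
  have hone : (η ^ 2 • (1 : Matrix (Fin n) (Fin n) ℝ)).PosDef := Matrix.PosDef.one.smul hη2
  have hGp : ∀ i, (G i).PosSemidef := fun i => hpsd i n x
  have hD : (∑ i, G i + η ^ 2 • (1 : Matrix (Fin n) (Fin n) ℝ)).PosDef :=
    Matrix.PosDef.posSemidef_add (Matrix.posSemidef_sum _ fun i _ => hGp i) hone
  have hR : (∑ i ∈ Finset.univ.erase j, G i
      + η ^ 2 • (1 : Matrix (Fin n) (Fin n) ℝ)).PosSemidef :=
    (Matrix.posSemidef_sum _ fun i _ => hGp i).add hone.posSemidef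
  have hsplit : ∑ i, G i + η ^ 2 • (1 : Matrix (Fin n) (Fin n) ℝ) =
      G j + (∑ i ∈ Finset.univ.erase j, G i + η ^ 2 • (1 : Matrix (Fin n) (Fin n) ℝ)) := by
    rw [← Finset.add_sum_erase _ _ (Finset.mem_univ j), add_assoc]
  set D := ∑ i, G i + η ^ 2 • (1 : Matrix (Fin n) (Fin n) ℝ) with hDdef
  set k : Fin n → ℝ := fun p => κ j (x p) z with hk
  have hk' : (fun p => κ j z (x p)) = k := by
    funext p
    exact hsymm j z (x p)
  rw [hk']
  set w := D⁻¹ *ᵥ k with hw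
  have hDw : D *ᵥ w = k := by
    rw [hw, Matrix.mulVec_mulVec, Matrix.mul_nonsing_inv _
      ((Matrix.isUnit_iff_isUnit_det _).1 hD.isUnit), Matrix.one_mulVec]
  have h1 := hR.dotProduct_mulVec_nonneg w
  have h2 : w ⬝ᵥ k = w ⬝ᵥ (G j *ᵥ w) + w ⬝ᵥ ((∑ i ∈ Finset.univ.erase j, G i
      + η ^ 2 • (1 : Matrix (Fin n) (Fin n) ℝ)) *ᵥ w) := by
    rw [← dotProduct_add, ← Matrix.add_mulVec, ← hsplit, hDw]
  have h3 := (hpsd j (n + 1) (Fin.cons z x)).dotProduct_mulVec_nonneg (Fin.cons 1 (-w))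
  have h4 : star (Fin.cons 1 (-w) : Fin (n + 1) → ℝ) ⬝ᵥ
      ((Matrix.of fun s t => κ j ((Fin.cons z x : Fin (n + 1) → X) s)
        ((Fin.cons z x : Fin (n + 1) → X) t)) *ᵥ (Fin.cons 1 (-w) : Fin (n + 1) → ℝ))
      = κ j z z - 2 * (w ⬝ᵥ k) + w ⬝ᵥ (G j *ᵥ w) := by
    have e : ∀ p, κ j z (x p) = k p := fun p => hsymm j z (x p)
    have e' : ∀ p, κ j (x p) z = k p := fun p => rfl
    simp only [star_trivial, dotProduct, mulVec, Fin.sum_univ_succ, Fin.cons_zero, Fin.cons_succ,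
      Matrix.of_apply, Pi.neg_apply, hG, e, e']
    simp only [mul_add, Finset.sum_add_distrib, mul_neg, neg_mul, Finset.sum_neg_distrib, mul_one,
      one_mul, neg_neg]
    have : ∑ p, k p * w p = ∑ p, w p * k p := Finset.sum_congr rfl fun p _ => mul_comm _ _
    rw [this]
    ring
  rw [h4] at h3
  rw [star_trivial] at h1
  rw [dotProduct_comm k w]
  linarith
end
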